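/- For N ≥ 2, parameters κ, γ, δ > 1 and any compatibility list C of positive reals, the social objective O(α) = Σ_{i=1}^N U_i(α) is strictly concave on the feasible set F = {α ∈ [0,1)^{n_N} : for every i there exists j ≠ i with α_{ij} > 0}. -/

import Mathlib

/-- ALKY utility of individual `i` given the compatibility matrix `c` and the
(symmetric) weight matrix `α`: sum over the other individuals j ≠ i. -/
noncomputable def Uind (N : ℕ) (κ γ δ : ℝ) (c : Fin N → Fin N → ℝ) (i : Fin N)
    (α : Fin N → Fin N → ℝ) : ℝ :=
  (∑ j ∈ Finset.univ.erase i, (κ * α i j * c i j - α i j ^ γ / (1 - α i j ^ γ)))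
    - (∑ j ∈ Finset.univ.erase i, α i j) ^ δ

/-- The social objective: the sum of the individual utilities. -/
noncomputable def socialObj (N : ℕ) (κ γ δ : ℝ) (c : Fin N → Fin N → ℝ)
    (α : Fin N → Fin N → ℝ) : ℝ :=
  ∑ i, Uind N κ γ δ c i α

/-- The feasible set of the Social Optimization Problem: symmetric weight
lists with zero diagonal, off-diagonal weights in [0,1), and no isolated
vertex (every individual has at least one strictly positive edge weight). -/
def WeightFeasible (N : ℕ) (α : Fin N → Fin N → ℝ) : Prop :=
  (∀ i j, α i j = α j i) ∧ (∀ i, α i i = 0) ∧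
  (∀ i j, i ≠ j → α i j ∈ Set.Ico (0:ℝ) 1) ∧
  (∀ i, ∃ j, j ≠ i ∧ 0 < α i j)

theorem aux_phi {P Q a b : ℝ} (hP : 0 < P) (hQ : 0 < Q) (ha : 0 < a) (hb : 0 < b)
    (hab : a + b = 1) : 1 / (a * P + b * Q) ≤ a * (1 / P) + b * (1 / Q) := by
  have h0 : 0 < a * P + b * Q := by positivity
  have e : a * (1 / P) + b * (1 / Q) = (a * Q + b * P) / (P * Q) := by
    field_simp
  rw [e, div_le_div_iff₀ h0 (by positivity)]
  have hb' : b = 1 - a := by linarith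
  have h1 : 0 ≤ a * b * (P - Q) ^ 2 := by positivity
  have h2 : (a * Q + b * P) * (a * P + b * Q) = a * b * (P - Q) ^ 2 + 1 * (P * Q) := by
    subst hb'; ring
  linarith

theorem aux_div {s : ℝ} (hs : s < 1) : s / (1 - s) = 1 / (1 - s) - 1 := by
  have : 1 - s ≠ 0 := by linarith
  field_simp
  ring

theorem aux_g {γ : ℝ} (hγ : 1 < γ) :
    StrictConvexOn ℝ (Set.Ico (0:ℝ) 1) (fun t => t ^ γ / (1 - t ^ γ)) := by
  refine ⟨convex_Ico 0 1, ?_⟩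
  intro x hx y hy hxy a b ha hb hab
  have hz := (strictConvexOn_rpow hγ).2 (Set.mem_Ici.2 hx.1) (Set.mem_Ici.2 hy.1) hxy ha hb hab
  simp only [smul_eq_mul] at hz ⊢
  have hp : x ^ γ < 1 := Real.rpow_lt_one hx.1 hx.2 (by linarith)
  have hq : y ^ γ < 1 := Real.rpow_lt_one hy.1 hy.2 (by linarith)
  generalize x ^ γ = p at *
  generalize y ^ γ = q at *
  generalize (a * x + b * y) ^ γ = r at *
  have hw : a * p + b * q < 1 := by
    have h1 : 0 < a * (1 - p) := mul_pos ha (by linarith)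
    have h2 : 0 < b * (1 - q) := mul_pos hb (by linarith)
    linarith
  rw [aux_div hp, aux_div hq, aux_div (hz.trans hw)]
  have h1 := aux_phi (P := 1 - p) (Q := 1 - q) (by linarith) (by linarith) ha hb hab
  have e : a * (1 - p) + b * (1 - q) = 1 - (a * p + b * q) := by linarith
  rw [e] at h1
  have h2 : 1 / (1 - r) < 1 / (1 - (a * p + b * q)) :=
    one_div_lt_one_div_of_lt (by linarith) (by linarith)
  linarith

theorem aux_convex (N : ℕ) : Convex ℝ {α : Fin N → Fin N → ℝ | WeightFeasible N α} := by
  intro x hx y hy a b ha hb hab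
  obtain ⟨x1, x2, x3, x4⟩ := hx
  obtain ⟨y1, y2, y3, y4⟩ := hy
  refine ⟨?_, ?_, ?_, ?_⟩
  · intro i j
    simp [x1 i j, y1 i j]
  · intro i
    simp [x2 i, y2 i]
  · intro i j hij
    exact convex_Ico 0 1 (x3 i j hij) (y3 i j hij) ha hb hab
  · intro i
    rcases ha.eq_or_lt with h | h
    · obtain ⟨j, hj, hp⟩ := y4 i
      have : b = 1 := by linarith
      exact ⟨j, hj, by simp [← h, this, hp]⟩
    · obtain ⟨j, hj, hp⟩ := x4 i
      refine ⟨j, hj, ?_⟩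
      have := (y3 i j hj.symm).1
      simp only [Pi.add_apply, Pi.smul_apply, smul_eq_mul]
      positivity

theorem aux_term {γ κ C x y a b : ℝ} (hγ : 1 < γ) (hx : x ∈ Set.Ico (0:ℝ) 1)
    (hy : y ∈ Set.Ico (0:ℝ) 1) (ha : 0 < a) (hb : 0 < b) (hab : a + b = 1) :
    a * (κ * x * C - x ^ γ / (1 - x ^ γ)) + b * (κ * y * C - y ^ γ / (1 - y ^ γ)) ≤
      κ * (a * x + b * y) * C - (a * x + b * y) ^ γ / (1 - (a * x + b * y) ^ γ) := by
  have := (aux_g hγ).convexOn.2 hx hy ha.le hb.le hab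
  simp only [smul_eq_mul] at this
  linarith

theorem aux_term_lt {γ κ C x y a b : ℝ} (hγ : 1 < γ) (hx : x ∈ Set.Ico (0:ℝ) 1)
    (hy : y ∈ Set.Ico (0:ℝ) 1) (hxy : x ≠ y) (ha : 0 < a) (hb : 0 < b) (hab : a + b = 1) :
    a * (κ * x * C - x ^ γ / (1 - x ^ γ)) + b * (κ * y * C - y ^ γ / (1 - y ^ γ)) <
      κ * (a * x + b * y) * C - (a * x + b * y) ^ γ / (1 - (a * x + b * y) ^ γ) := by
  have := (aux_g hγ).2 hx hy hxy ha hb hab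
  simp only [smul_eq_mul] at this
  linarith

theorem aux_deg {N : ℕ} {δ a b : ℝ} (hδ : 1 < δ) (i : Fin N) {x y : Fin N → Fin N → ℝ}
    (hx : WeightFeasible N x) (hy : WeightFeasible N y)
    (ha : 0 < a) (hb : 0 < b) (hab : a + b = 1) :
    (∑ j ∈ Finset.univ.erase i, (a * x i j + b * y i j)) ^ δ ≤
      a * (∑ j ∈ Finset.univ.erase i, x i j) ^ δ
        + b * (∑ j ∈ Finset.univ.erase i, y i j) ^ δ := by
  have h1 : 0 ≤ ∑ j ∈ Finset.univ.erase i, x i j :=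
    Finset.sum_nonneg fun j hj => (hx.2.2.1 i j (Finset.ne_of_mem_erase hj).symm).1
  have h2 : 0 ≤ ∑ j ∈ Finset.univ.erase i, y i j :=
    Finset.sum_nonneg fun j hj => (hy.2.2.1 i j (Finset.ne_of_mem_erase hj).symm).1
  have := (convexOn_rpow hδ.le).2 (Set.mem_Ici.2 h1) (Set.mem_Ici.2 h2) ha.le hb.le hab
  simp only [smul_eq_mul] at this
  rwa [Finset.sum_add_distrib, ← Finset.mul_sum, ← Finset.mul_sum]

/-- For N ≥ 2, parameters κ, γ, δ > 1 and a positive symmetric compatibility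
list, the social objective is strictly concave on the feasible set. -/
theorem stmt_6 (N : ℕ) (hN : 2 ≤ N) (κ γ δ : ℝ) (hκ : 1 < κ) (hγ : 1 < γ) (hδ : 1 < δ)
    (c : Fin N → Fin N → ℝ) (hcs : ∀ i j, c i j = c j i)
    (hcpos : ∀ i j, i ≠ j → 0 < c i j) :
    StrictConcaveOn ℝ {α : Fin N → Fin N → ℝ | WeightFeasible N α}
      (socialObj N κ γ δ c) := by
  refine ⟨aux_convex N, ?_⟩
  intro x hx y hy hxy a b ha hb hab
  have hne : ∃ i j, x i j ≠ y i j := by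
    by_contra! h
    exact hxy (funext fun i => funext fun j => h i j)
  obtain ⟨i₀, j₀, h0⟩ := hne
  have hij : j₀ ≠ i₀ := by
    rintro rfl
    exact h0 (by rw [hx.2.1, hy.2.1])
  simp only [socialObj, smul_eq_mul, Finset.mul_sum, ← Finset.sum_add_distrib]
  have key : ∀ i, ∀ j ∈ Finset.univ.erase i, _ := fun i j hj =>
    aux_term (κ := κ) (C := c i j) hγ (hx.2.2.1 i j (Finset.ne_of_mem_erase hj).symm)
      (hy.2.2.1 i j (Finset.ne_of_mem_erase hj).symm) ha hb hab
  refine Finset.sum_lt_sum (fun i _ => ?_) ⟨i₀, Finset.mem_univ _, ?_⟩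
  · have h1 := Finset.sum_le_sum (key i)
    have h2 := aux_deg hδ i hx hy ha hb hab
    rw [Finset.sum_add_distrib, ← Finset.mul_sum, ← Finset.mul_sum] at h1
    simp only [Uind, Pi.add_apply, Pi.smul_apply, smul_eq_mul]
    linarith
  · have h1 := Finset.sum_lt_sum (key i₀) ⟨j₀, Finset.mem_erase.2 ⟨hij, Finset.mem_univ _⟩,
      aux_term_lt (κ := κ) (C := c i₀ j₀) hγ (hx.2.2.1 i₀ j₀ hij.symm)
        (hy.2.2.1 i₀ j₀ hij.symm) h0 ha hb hab⟩
    have h2 := aux_deg hδ i₀ hx hy ha hb hab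
    rw [Finset.sum_add_distrib, ← Finset.mul_sum, ← Finset.mul_sum] at h1
    simp only [Uind, Pi.add_apply, Pi.smul_apply, smul_eq_mul]
    linarith
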